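/- arXiv:2311.06591 — 2 statements merged into one kernel-verified Lean document; each statement's English description precedes it below -/
import Mathlib

section
/- For every τ in the complex upper half-plane, c(τ) ≠ 0 and c₁(τ/2) ≠ 0, and for all z ∈ ℂ one has 4z³ − β(τ)z + 1 = 4·(z − c(τ))·(z − c₁(τ/2)/(2c(τ)))·(z + 1/(2c₁(τ/2))); i.e., the three roots of the cubic 4x³ − β(τ)x + 1 are exactly c(τ), c₁(τ/2)/(2c(τ)), and −1/(2c₁(τ/2)). -/
open Complex

/-- The nome `q = exp(2πiτ)`. -/
noncomputable def nome (τ : ℂ) : ℂ := Complex.exp (2 * Real.pi * I * τ)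

/-- Ramanujan's cubic continued fraction, as an infinite product:
`c(τ) = q^{1/3} ∏_{n≥1} (1-q^{6n-1})(1-q^{6n-5})/(1-q^{6n-3})²`. -/
noncomputable def c (τ : ℂ) : ℂ :=
  Complex.exp (2 * Real.pi * I * τ / 3) *
    ∏' n : ℕ,
      ((1 - nome τ ^ (6 * (n + 1) - 1)) * (1 - nome τ ^ (6 * (n + 1) - 5)) /
        (1 - nome τ ^ (6 * (n + 1) - 3)) ^ 2)

/-- The Dedekind eta function `η(τ) = e^{πiτ/12} ∏_{n≥1} (1 - e^{2πinτ})`. -/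
noncomputable def dedekindEta (τ : ℂ) : ℂ :=
  Complex.exp (Real.pi * I * τ / 12) *
    ∏' n : ℕ, (1 - Complex.exp (2 * Real.pi * I * (n + 1) * τ))

/-- `α(τ) = 3 + 27 η(9τ)³/η(τ)³`. -/
noncomputable def alpha (τ : ℂ) : ℂ :=
  3 + 27 * dedekindEta (9 * τ) ^ 3 / dedekindEta τ ^ 3

/-- `β(τ) = 3 + η(τ/3)³/η(3τ)³`. -/
noncomputable def beta (τ : ℂ) : ℂ :=
  3 + dedekindEta (τ / 3) ^ 3 / dedekindEta (3 * τ) ^ 3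

/-- `c₁(τ) = c(τ + 3/2)`. -/
noncomputable def c₁ (τ : ℂ) : ℂ := c (τ + 3 / 2)

open Finset Filter Topology

/-- The `q`-Pochhammer symbol `(a; q)_∞ = ∏_{n ≥ 0} (1 - a qⁿ)`. -/
noncomputable def qPoch (a q : ℂ) : ℂ := ∏' n : ℕ, (1 - a * q ^ n)

section qPoch

variable {a q : ℂ}

lemma summable_norm_neg_mul_pow (a : ℂ) (hq : ‖q‖ < 1) : Summable fun n : ℕ ↦ ‖-(a * q ^ n)‖ := by
  simpa using (summable_geometric_of_lt_one (norm_nonneg q) hq).mul_left ‖a‖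

lemma multipliable_qPoch (a : ℂ) (hq : ‖q‖ < 1) : Multipliable fun n : ℕ ↦ 1 - a * q ^ n := by
  simpa [sub_eq_add_neg] using multipliable_one_add_of_summable (summable_norm_neg_mul_pow a hq)

lemma tendsto_qPoch (a : ℂ) (hq : ‖q‖ < 1) :
    Tendsto (fun N ↦ ∏ n ∈ range N, (1 - a * q ^ n)) atTop (𝓝 (qPoch a q)) :=
  (multipliable_qPoch a hq).hasProd.tendsto_prod_nat

lemma one_sub_ne_zero_of_norm_lt_one {w : ℂ} (hw : ‖w‖ < 1) : 1 - w ≠ 0 := by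
  intro h
  rw [← sub_eq_zero.mp h] at hw
  simp at hw

lemma qPoch_ne_zero (ha : ‖a‖ < 1) (hq : ‖q‖ < 1) : qPoch a q ≠ 0 := by
  have h : ∏' n : ℕ, (1 + -(a * q ^ n)) ≠ 0 := by
    refine tprod_one_add_ne_zero_of_summable (fun n ↦ ?_) (summable_norm_neg_mul_pow a hq)
    rw [← sub_eq_add_neg]
    apply one_sub_ne_zero_of_norm_lt_one
    rw [norm_mul, norm_pow]
    exact (mul_le_of_le_one_right (norm_nonneg _) (pow_le_one₀ (norm_nonneg _) hq.le)).trans_lt ha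
  simpa [qPoch, sub_eq_add_neg] using h

lemma qPoch_eq_one_sub_mul (a : ℂ) (hq : ‖q‖ < 1) : qPoch a q = (1 - a) * qPoch (a * q) q := by
  have h := tprod_eq_zero_mul' (f := fun n : ℕ ↦ 1 - a * q ^ n)
    (by simpa [pow_succ', mul_assoc] using multipliable_qPoch (a * q) hq)
  simpa [qPoch, pow_succ', mul_assoc] using h

lemma qPoch_eq_mul_two (a : ℂ) (hq : ‖q‖ < 1) :
    qPoch a q = qPoch a (q ^ 2) * qPoch (a * q) (q ^ 2) := by
  have hq2 : ‖q ^ 2‖ < 1 := by simpa using pow_lt_one₀ (norm_nonneg q) hq two_ne_zero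
  have h := tprod_even_mul_odd (f := fun n : ℕ ↦ 1 - a * q ^ n)
    (by simpa [pow_mul] using multipliable_qPoch a hq2)
    (by simpa [pow_mul, pow_succ', mul_assoc] using multipliable_qPoch (a * q) hq2)
  simpa [qPoch, pow_mul, pow_succ', mul_assoc] using h.symm

lemma qPoch_eq_mul_three (a : ℂ) (hq : ‖q‖ < 1) :
    qPoch a q = qPoch a (q ^ 3) * qPoch (a * q) (q ^ 3) * qPoch (a * q ^ 2) (q ^ 3) := by
  have hq3 : ‖q ^ 3‖ < 1 := by simpa using pow_lt_one₀ (norm_nonneg q) hq three_ne_zero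
  refine tendsto_nhds_unique ((tendsto_qPoch a hq).comp (tendsto_id.const_mul_atTop' three_pos))
    ((((tendsto_qPoch a hq3).mul (tendsto_qPoch (a * q) hq3)).mul
      (tendsto_qPoch (a * q ^ 2) hq3)).congr fun N ↦ ?_)
  induction N with
  | zero => simp
  | succ N ih =>
    simp only [Function.comp_apply, id_eq, mul_add, mul_one, prod_range_succ] at ih ⊢
    rw [show 3 * N + 3 = 3 * N + 1 + 1 + 1 from rfl, prod_range_succ, prod_range_succ,
      prod_range_succ, ← ih]
    ring

lemma qPoch_mul_qPoch_neg (a : ℂ) (hq : ‖q‖ < 1) :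
    qPoch a q * qPoch (-a) q = qPoch (a ^ 2) (q ^ 2) := by
  rw [qPoch, qPoch, ← (multipliable_qPoch a hq).tprod_mul (multipliable_qPoch (-a) hq), qPoch]
  congr 1 with n
  ring

end qPoch

section JacobiTripleProduct

variable {a q : ℂ}

/-- The general term `aⁿ q^{n(n-1)/2}` of the bilateral theta series. -/
noncomputable def thetaTerm (a q : ℂ) (n : ℤ) : ℂ := a ^ n * q ^ (n * (n - 1) / 2)

@[simp] lemma thetaTerm_zero (a q : ℂ) : thetaTerm a q 0 = 1 := by simp [thetaTerm]

lemma thetaTerm_ne_zero (ha : a ≠ 0) (hq : q ≠ 0) (n : ℤ) : thetaTerm a q n ≠ 0 :=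
  mul_ne_zero (zpow_ne_zero _ ha) (zpow_ne_zero _ hq)

lemma thetaTerm_add_one (ha : a ≠ 0) (hq : q ≠ 0) (n : ℤ) :
    thetaTerm a q (n + 1) = a * q ^ n * thetaTerm a q n := by
  have h : (n + 1) * (n + 1 - 1) / 2 = n + n * (n - 1) / 2 := by
    rw [show (n + 1) * (n + 1 - 1) = n * (n - 1) + n * 2 by ring,
      Int.add_mul_ediv_right _ _ two_ne_zero, add_comm]
  rw [thetaTerm, thetaTerm, h, zpow_add₀ hq, zpow_add₀ ha, zpow_one]
  ring

lemma thetaTerm_sub_one (ha : a ≠ 0) (hq : q ≠ 0) (n : ℤ) :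
    thetaTerm a q (n - 1) = a⁻¹ * q ^ (1 - n) * thetaTerm a q n := by
  have h := thetaTerm_add_one ha hq (n - 1)
  rw [sub_add_cancel] at h
  rw [h, ← neg_sub n 1, zpow_neg]
  field_simp

lemma eq_mul_thetaTerm (ha : a ≠ 0) (hq : q ≠ 0) {s : ℤ → ℂ}
    (hs : ∀ n, s (n + 1) = a * q ^ n * s n) (n : ℤ) : s n = s 0 * thetaTerm a q n := by
  induction n using Int.induction_on with
  | zero => simp
  | succ n ih => rw [hs, ih, thetaTerm_add_one ha hq]; ring
  | pred n ih =>
    have h := hs (-n - 1)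
    rw [sub_add_cancel, ih] at h
    have h' := thetaTerm_add_one ha hq (-n - 1)
    rw [sub_add_cancel] at h'
    rw [h'] at h
    have : a * q ^ (-(n : ℤ) - 1) ≠ 0 := mul_ne_zero ha (zpow_ne_zero _ hq)
    apply mul_left_cancel₀ this
    rw [← h]
    ring

lemma summable_nat_of_succ_eq_mul_pow {s : ℕ → ℂ} (hq1 : ‖q‖ < 1) (h0 : ∀ n, s n ≠ 0) (b : ℂ)
    (hs : ∀ n, s (n + 1) = b * q ^ n * s n) : Summable s := by
  refine summable_of_ratio_test_tendsto_lt_one zero_lt_one (.of_forall h0) ?_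
  have : Tendsto (fun n : ℕ ↦ ‖b * q ^ n‖) atTop (𝓝 0) := by
    simpa using ((tendsto_pow_atTop_nhds_zero_of_norm_lt_one hq1).const_mul b).norm
  refine this.congr fun n ↦ ?_
  rw [hs, norm_mul _ (s n), mul_div_cancel_right₀ _ (norm_ne_zero_iff.mpr (h0 n))]

lemma summable_thetaTerm (ha : a ≠ 0) (hq : q ≠ 0) (hq1 : ‖q‖ < 1) :
    Summable (thetaTerm a q) := by
  refine .of_nat_of_neg
    (summable_nat_of_succ_eq_mul_pow hq1 (fun n ↦ thetaTerm_ne_zero ha hq _) a fun n ↦ ?_)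
    (summable_nat_of_succ_eq_mul_pow hq1 (fun n ↦ thetaTerm_ne_zero ha hq _) (a⁻¹ * q) fun n ↦ ?_)
  · simpa using thetaTerm_add_one ha hq n
  · have h := thetaTerm_sub_one ha hq (-n)
    rw [show -((n + 1 : ℕ) : ℤ) = -n - 1 by push_cast; ring, h,
      show (1 - -n : ℤ) = 1 + n by ring, zpow_add₀ hq]
    simp [mul_assoc]

/-- The reciprocal `1 / (q; q)_m`, extended by zero to negative `m`. -/
noncomputable def invQFactorial (q : ℂ) (m : ℤ) : ℂ :=
  if m < 0 then 0 else (∏ k ∈ range m.toNat, (1 - q * q ^ k))⁻¹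

lemma invQFactorial_of_neg {m : ℤ} (hm : m < 0) : invQFactorial q m = 0 := if_pos hm

@[simp] lemma invQFactorial_natCast (q : ℂ) (m : ℕ) :
    invQFactorial q m = (∏ k ∈ range m, (1 - q * q ^ k))⁻¹ := by simp [invQFactorial]

lemma one_sub_pow_succ_ne_zero (hq1 : ‖q‖ < 1) (k : ℕ) : 1 - q * q ^ k ≠ 0 := by
  apply one_sub_ne_zero_of_norm_lt_one
  rw [← pow_succ', norm_pow]
  exact pow_lt_one₀ (norm_nonneg _) hq1 k.succ_ne_zero

lemma invQFactorial_sub_one (hq1 : ‖q‖ < 1) (m : ℤ) :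
    invQFactorial q (m - 1) = (1 - q ^ m) * invQFactorial q m := by
  rcases lt_trichotomy m 0 with hm | rfl | hm
  · rw [invQFactorial_of_neg hm, invQFactorial_of_neg (by lia), mul_zero]
  · simp [invQFactorial_of_neg]
  · obtain ⟨k, rfl⟩ : ∃ k : ℕ, m = k + 1 := ⟨(m - 1).toNat, by lia⟩
    have := one_sub_pow_succ_ne_zero hq1 k
    rw [add_sub_cancel_right, ← Nat.cast_add_one, invQFactorial_natCast, invQFactorial_natCast,
      prod_range_succ, zpow_natCast, pow_succ', mul_inv]
    field_simp

/-- The coefficient `1 / ((q; q)_{N-j} (q; q)_{N+j})` of the finite triple product identity. -/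
noncomputable def thetaCoeff (q : ℂ) (N j : ℤ) : ℂ :=
  invQFactorial q (N - j) * invQFactorial q (N + j)

lemma thetaCoeff_eq_zero {N j : ℤ} (hj : j ∉ Finset.Icc (-N) N) : thetaCoeff q N j = 0 := by
  rw [Finset.mem_Icc, not_and_or] at hj
  rcases hj with hj | hj
  · rw [thetaCoeff, invQFactorial_of_neg (m := N + j) (by lia), mul_zero]
  · rw [thetaCoeff, invQFactorial_of_neg (m := N - j) (by lia), zero_mul]

lemma summable_thetaCoeff_mul (q : ℂ) (N : ℤ) (t : ℤ → ℂ) :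
    Summable fun j ↦ thetaCoeff q N j * t j :=
  (hasSum_sum_of_ne_finset_zero (s := Finset.Icc (-N) N) fun j hj ↦ by
    rw [thetaCoeff_eq_zero hj, zero_mul]).summable

lemma thetaCoeff_add_one (hq : q ≠ 0) (hq1 : ‖q‖ < 1) (N j : ℤ) :
    (1 - q ^ (2 * N + 1)) * (1 - q ^ (2 * N + 2)) * thetaCoeff q (N + 1) j =
      (1 + q ^ (2 * N + 1)) * thetaCoeff q N j + q ^ (N + 1 - j) * thetaCoeff q N (j - 1) +
        q ^ (N + 1 + j) * thetaCoeff q N (j + 1) := by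
  have h1 := invQFactorial_sub_one hq1 (N + 1 - j)
  have h2 := invQFactorial_sub_one hq1 (N + 1 + j)
  have h3 := invQFactorial_sub_one hq1 (N - j)
  have h4 := invQFactorial_sub_one hq1 (N + j)
  rw [show N + 1 - j - 1 = N - j by ring] at h1
  rw [show N + 1 + j - 1 = N + j by ring] at h2
  rw [h1] at h3
  rw [h2] at h4
  simp only [thetaCoeff]
  rw [show N - (j - 1) = N + 1 - j by ring, show N + (j - 1) = N + j - 1 by ring,
    show N - (j + 1) = N - j - 1 by ring, show N + (j + 1) = N + 1 + j by ring, h3, h4, h1, h2]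
  have e1 : q ^ (2 * N + 1) = q ^ (N - j) * q ^ (N + j) * q := by
    rw [← zpow_add₀ hq, ← zpow_add_one₀ hq]; congr 1; ring
  have e2 : q ^ (2 * N + 2) = q ^ (N - j) * q ^ (N + j) * q * q := by
    rw [← zpow_add₀ hq, ← zpow_add_one₀ hq, ← zpow_add_one₀ hq]; congr 1; ring
  have e3 : q ^ (N + 1 - j) = q ^ (N - j) * q := by
    rw [← zpow_add_one₀ hq]; congr 1; ring
  have e4 : q ^ (N + 1 + j) = q ^ (N + j) * q := by
    rw [← zpow_add_one₀ hq]; congr 1; ring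
  rw [e1, e2, e3, e4]
  ring

lemma tsum_thetaCoeff_add_one (ha : a ≠ 0) (hq : q ≠ 0) (hq1 : ‖q‖ < 1) (N : ℤ) :
    (1 - q ^ (2 * N + 1)) * (1 - q ^ (2 * N + 2)) *
        ∑' j, thetaCoeff q (N + 1) j * thetaTerm a q j =
      (1 + a * q ^ N) * (1 + q / a * q ^ N) * ∑' j, thetaCoeff q N j * thetaTerm a q j := by
  have hs := summable_thetaCoeff_mul q N
  have hs₁ : ∑' j, q ^ (N + 1 - j) * thetaCoeff q N (j - 1) * thetaTerm a q j =
      a * q ^ N * ∑' j, thetaCoeff q N j * thetaTerm a q j := by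
    rw [← tsum_mul_left, ← (Equiv.addRight (1 : ℤ)).tsum_eq]
    congr 1 with j
    rw [Equiv.coe_addRight, thetaTerm_add_one ha hq, add_sub_cancel_right,
      show N + 1 - (j + 1) = N - j by ring, zpow_sub₀ hq]
    field_simp
  have hs₂ : ∑' j, q ^ (N + 1 + j) * thetaCoeff q N (j + 1) * thetaTerm a q j =
      q / a * q ^ N * ∑' j, thetaCoeff q N j * thetaTerm a q j := by
    rw [← tsum_mul_left, ← (Equiv.subRight (1 : ℤ)).tsum_eq]
    congr 1 with j
    rw [Equiv.subRight_apply, thetaTerm_sub_one ha hq, sub_add_cancel,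
      show N + 1 + (j - 1) = N + j by ring, zpow_add₀ hq, zpow_sub₀ hq, zpow_one]
    field_simp
  have hsum₁ : Summable fun j ↦ q ^ (N + 1 - j) * thetaCoeff q N (j - 1) * thetaTerm a q j :=
    ((Equiv.subRight (1 : ℤ)).summable_iff.mpr
      (hs fun j ↦ q ^ (N - j) * thetaTerm a q (j + 1))).congr fun j ↦ by
        simp only [Function.comp_apply, Equiv.subRight_apply, sub_add_cancel]
        rw [show N - (j - 1) = N + 1 - j by ring]
        ring
  have hsum₂ : Summable fun j ↦ q ^ (N + 1 + j) * thetaCoeff q N (j + 1) * thetaTerm a q j :=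
    ((Equiv.addRight (1 : ℤ)).summable_iff.mpr
      (hs fun j ↦ q ^ (N + j) * thetaTerm a q (j - 1))).congr fun j ↦ by
        simp only [Function.comp_apply, Equiv.coe_addRight, add_sub_cancel_right]
        rw [show N + (j + 1) = N + 1 + j by ring]
        ring
  calc _ = ∑' j, ((1 + q ^ (2 * N + 1)) * (thetaCoeff q N j * thetaTerm a q j) +
        q ^ (N + 1 - j) * thetaCoeff q N (j - 1) * thetaTerm a q j +
        q ^ (N + 1 + j) * thetaCoeff q N (j + 1) * thetaTerm a q j) := by
        rw [← tsum_mul_left]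
        congr 1 with j
        rw [← mul_assoc, thetaCoeff_add_one hq hq1]
        ring
    _ = _ := by
        rw [(((hs _).mul_left _).add hsum₁).tsum_add hsum₂, ((hs _).mul_left _).tsum_add hsum₁,
          hs₁, hs₂, tsum_mul_left, zpow_add_one₀ hq, two_mul, zpow_add₀ hq]
        field_simp
        ring

lemma prod_mul_prod_eq_tsum_thetaCoeff (ha : a ≠ 0) (hq : q ≠ 0) (hq1 : ‖q‖ < 1) (N : ℕ) :
    (∏ k ∈ range N, (1 - -a * q ^ k)) * ∏ k ∈ range N, (1 - -(q / a) * q ^ k) =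
      (∏ k ∈ range (2 * N), (1 - q * q ^ k)) *
        ∑' j, thetaCoeff q N j * thetaTerm a q j := by
  induction N with
  | zero =>
    rw [tsum_eq_single 0 fun j hj ↦ by
      rw [thetaCoeff_eq_zero (by simpa using hj), zero_mul]]
    simp [thetaCoeff, invQFactorial]
  | succ N ih =>
    have h := tsum_thetaCoeff_add_one ha hq hq1 N
    rw [show (2 * N + 1 : ℤ) = (2 * N + 1 : ℕ) by push_cast; ring,
      show (2 * N + 2 : ℤ) = (2 * N + 1 + 1 : ℕ) by push_cast; ring] at h
    simp only [zpow_natCast] at h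
    rw [prod_range_succ, prod_range_succ, show 2 * (N + 1) = 2 * N + 1 + 1 by ring,
      prod_range_succ, prod_range_succ, mul_mul_mul_comm, ih, Nat.cast_add_one]
    rw [← pow_succ', ← pow_succ']
    linear_combination -(∏ k ∈ range (2 * N), (1 - q * q ^ k)) * h

/-- The Jacobi triple product identity. -/
theorem tsum_thetaTerm (ha : a ≠ 0) (hq : q ≠ 0) (hq1 : ‖q‖ < 1) :
    ∑' n, thetaTerm a q n = qPoch q q * qPoch (-a) q * qPoch (-(q / a)) q := by
  have hE := tendsto_qPoch q hq1
  have hE0 := qPoch_ne_zero hq1 hq1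
  have hinv : Tendsto (fun N : ℕ ↦ invQFactorial q N) atTop (𝓝 (qPoch q q)⁻¹) := by
    simpa using hE.inv₀ hE0
  obtain ⟨M, hM⟩ := (Metric.isBounded_range_of_tendsto _ hinv).exists_norm_le
  have hM' (m : ℤ) : ‖invQFactorial q m‖ ≤ M := by
    rcases lt_or_ge m 0 with hm | hm
    · rw [invQFactorial_of_neg hm, norm_zero]
      exact (norm_nonneg _).trans (hM _ ⟨0, rfl⟩)
    · lift m to ℕ using hm
      exact hM _ ⟨m, rfl⟩
  have hinvZ : Tendsto (invQFactorial q) atTop (𝓝 (qPoch q q)⁻¹) := by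
    rw [← Nat.map_cast_int_atTop]
    exact hinv
  have hcast : Tendsto (fun N : ℕ ↦ (N : ℤ)) atTop atTop := tendsto_natCast_atTop_atTop
  have hlim : Tendsto (fun N : ℕ ↦ ∑' j, thetaCoeff q N j * thetaTerm a q j) atTop
      (𝓝 (∑' j, (qPoch q q)⁻¹ * (qPoch q q)⁻¹ * thetaTerm a q j)) := by
    refine tendsto_tsum_of_dominated_convergence (bound := fun j ↦ M * M * ‖thetaTerm a q j‖)
      ((summable_thetaTerm ha hq hq1).norm.mul_left _) (fun j ↦ ?_) (.of_forall fun N j ↦ ?_)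
    · exact ((hinvZ.comp (tendsto_atTop_add_const_right _ (-j) hcast)).mul
        (hinvZ.comp (tendsto_atTop_add_const_right _ j hcast))).mul_const _
    · rw [norm_mul, thetaCoeff, norm_mul]
      gcongr
      · exact (norm_nonneg _).trans (hM' 0)
      · exact hM' _
      · exact hM' _
  have h := tendsto_nhds_unique
    (((tendsto_qPoch (-a) hq1).mul (tendsto_qPoch (-(q / a)) hq1)).congr
      (prod_mul_prod_eq_tsum_thetaCoeff ha hq hq1))
    ((hE.comp (tendsto_id.const_mul_atTop' two_pos)).mul hlim)
  rw [tsum_mul_left] at h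
  rw [mul_assoc, h]
  field_simp

end JacobiTripleProduct

section CubicContinuedFraction

variable {x : ℂ}

lemma tsum_thetaTerm_of_mul_eq {a b q : ℂ} (ha : a ≠ 0) (hq : q ≠ 0) (hq1 : ‖q‖ < 1)
    (hab : a * b = q) :
    ∑' n, thetaTerm a q n = qPoch q q * qPoch (-a) q * qPoch (-b) q := by
  rw [tsum_thetaTerm ha hq hq1, ← hab, mul_div_cancel_left₀ _ ha]

lemma tsum_int_eq_three_mul {f : ℤ → ℂ} (hf : Summable f) :
    ∑' n, f n = ∑' n, f (3 * n) + ∑' n, f (3 * n + 1) + ∑' n, f (3 * n - 1) := by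
  have hs (k : ℤ) : Summable fun n : ℤ ↦ f (3 * n + k) :=
    hf.comp_injective fun m n h ↦ by simpa using h
  have h := (Int.divModEquiv 3).symm.tsum_eq f
  have hp : Summable fun p : ℤ × Fin 3 ↦ f ((Int.divModEquiv 3).symm p) :=
    (Int.divModEquiv 3).symm.summable_iff.mpr hf
  have h₂ : ∑' n, f (3 * n + 2) = ∑' n, f (3 * n - 1) := by
    rw [← (Equiv.subRight (1 : ℤ)).tsum_eq]
    congr 1 with n
    rw [Equiv.subRight_apply]
    congr 1
    ring
  have h0 := hs 0
  simp only [add_zero] at h0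
  rw [← h, hp.tsum_prod, ← h₂, ← h0.tsum_add (hs 1), ← (h0.add (hs 1)).tsum_add (hs 2)]
  congr 1 with n
  rw [tsum_fintype, Fin.sum_univ_three]
  simp [Int.divModEquiv, mul_comm]

lemma tsum_thetaTerm_eq_three_mul {a q : ℂ} (ha : a ≠ 0) (hq : q ≠ 0) (hq1 : ‖q‖ < 1) :
    ∑' n, thetaTerm a q n = ∑' n, thetaTerm (a ^ 3 * q ^ 3) (q ^ 9) n +
      a * ∑' n, thetaTerm (a ^ 3 * q ^ 6) (q ^ 9) n +
      q / a * ∑' n, thetaTerm (a ^ 3) (q ^ 9) n := by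
  have hrec (k n : ℤ) : thetaTerm a q (3 * (n + 1) + k) =
      a ^ 3 * q ^ (3 * k + 3) * (q ^ 9) ^ n * thetaTerm a q (3 * n + k) := by
    rw [show 3 * (n + 1) + k = 3 * n + k + 1 + 1 + 1 by ring, thetaTerm_add_one ha hq,
      thetaTerm_add_one ha hq, thetaTerm_add_one ha hq, ← zpow_natCast q 9, ← zpow_mul]
    have : q ^ (3 * k + 3) * q ^ (((9 : ℕ) : ℤ) * n) =
        q ^ (3 * n + k + 1 + 1) * q ^ (3 * n + k + 1) * q ^ (3 * n + k) := by
      simp only [← zpow_add₀ hq]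
      congr 1
      push_cast
      ring
    linear_combination -a ^ 3 * thetaTerm a q (3 * n + k) * this
  have hq9 : q ^ 9 ≠ 0 := pow_ne_zero _ hq
  have ha3 : a ^ 3 ≠ 0 := pow_ne_zero _ ha
  have key (k : ℤ) (b : ℂ) (hb : b = a ^ 3 * q ^ (3 * k + 3)) :
      ∑' n, thetaTerm a q (3 * n + k) = thetaTerm a q k * ∑' n, thetaTerm b (q ^ 9) n := by
    have hb0 : b ≠ 0 := hb ▸ mul_ne_zero ha3 (zpow_ne_zero _ hq)
    rw [← tsum_mul_left]
    congr 1 with n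
    rw [eq_mul_thetaTerm hb0 hq9 (s := fun n ↦ thetaTerm a q (3 * n + k))
      (fun n ↦ by rw [hb, hrec]), mul_zero, zero_add]
  have h0 := key 0 (a ^ 3 * q ^ 3) (by norm_num)
  have h1 := key 1 (a ^ 3 * q ^ 6) (by norm_num)
  have h2 := key (-1) (a ^ 3) (by norm_num)
  simp only [add_zero, ← sub_eq_add_neg] at h0 h2
  rw [tsum_int_eq_three_mul (summable_thetaTerm ha hq hq1), h0, h1, h2,
    show thetaTerm a q 1 = a by simp [thetaTerm],
    show thetaTerm a q (-1) = q / a by simp [thetaTerm]; ring, thetaTerm_zero, one_mul]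

lemma norm_pow_lt_one (hx1 : ‖x‖ < 1) {k : ℕ} (hk : k ≠ 0) : ‖x ^ k‖ < 1 := by
  simpa using pow_lt_one₀ (norm_nonneg x) hx1 hk

/-- The product form of Ramanujan's theta function `ψ(x) = ∑_{n ≥ 0} x^{n(n+1)/2}`. -/
noncomputable def ramanujanPsi (x : ℂ) : ℂ := qPoch x x * qPoch (-x) x ^ 2

/-- The product form of Ramanujan's theta function `φ(-x) = ∑_{n ∈ ℤ} (-1)ⁿ x^{n²}`. -/
noncomputable def ramanujanPhiNeg (x : ℂ) : ℂ := qPoch (x ^ 2) (x ^ 2) * qPoch x (x ^ 2) ^ 2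

/-- The cubic continued fraction as a function of `x = q^{1/3}`. -/
noncomputable def cubicCF (x : ℂ) : ℂ :=
  x * (qPoch (x ^ 3) (x ^ 18) * qPoch (x ^ 15) (x ^ 18) / qPoch (x ^ 9) (x ^ 18) ^ 2)

lemma ramanujanPsi_ne_zero (hx1 : ‖x‖ < 1) : ramanujanPsi x ≠ 0 :=
  mul_ne_zero (qPoch_ne_zero hx1 hx1) (pow_ne_zero _ (qPoch_ne_zero (by simpa using hx1) hx1))

lemma ramanujanPhiNeg_ne_zero (hx1 : ‖x‖ < 1) : ramanujanPhiNeg x ≠ 0 :=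
  have h2 := norm_pow_lt_one hx1 two_ne_zero
  mul_ne_zero (qPoch_ne_zero h2 h2) (pow_ne_zero _ (qPoch_ne_zero hx1 h2))

lemma cubicCF_ne_zero (hx : x ≠ 0) (hx1 : ‖x‖ < 1) : cubicCF x ≠ 0 := by
  have h (k : ℕ) (hk : k ≠ 0) : qPoch (x ^ k) (x ^ 18) ≠ 0 :=
    qPoch_ne_zero (norm_pow_lt_one hx1 hk) (norm_pow_lt_one hx1 (by norm_num))
  exact mul_ne_zero hx (div_ne_zero (mul_ne_zero (h 3 (by norm_num)) (h 15 (by norm_num)))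
    (pow_ne_zero _ (h 9 (by norm_num))))

lemma two_mul_ramanujanPsi (hx : x ≠ 0) (hx1 : ‖x‖ < 1) :
    2 * ramanujanPsi x = ∑' n, thetaTerm x x n := by
  rw [tsum_thetaTerm_of_mul_eq hx hx hx1 (mul_one x), qPoch_eq_one_sub_mul (-1) hx1,
    ramanujanPsi, neg_one_mul]
  ring

lemma ramanujanPhiNeg_eq_tsum (hx : x ≠ 0) (hx1 : ‖x‖ < 1) :
    ramanujanPhiNeg x = ∑' n, thetaTerm (-x) (x ^ 2) n := by
  rw [tsum_thetaTerm_of_mul_eq (b := -x) (neg_ne_zero.mpr hx) (pow_ne_zero _ hx)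
    (norm_pow_lt_one hx1 two_ne_zero) (by ring), neg_neg, ramanujanPhiNeg]
  ring

/-- Euler's identity `(-x; x)_∞ (x; x²)_∞ = 1`. -/
lemma qPoch_neg_mul_qPoch_sq (hx1 : ‖x‖ < 1) : qPoch (-x) x * qPoch x (x ^ 2) = 1 := by
  have h2 := norm_pow_lt_one hx1 two_ne_zero
  have h := qPoch_eq_mul_two x hx1
  rw [← sq] at h
  have h' := qPoch_mul_qPoch_neg x hx1
  have hne := qPoch_ne_zero h2 h2
  apply mul_right_cancel₀ hne
  linear_combination h' - qPoch (-x) x * h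

lemma qPoch_self_eq (hx1 : ‖x‖ < 1) : qPoch x x = qPoch x (x ^ 2) * qPoch (x ^ 2) (x ^ 2) := by
  have h := qPoch_eq_mul_two x hx1
  rwa [← sq] at h

lemma ramanujanPsi_mul_ramanujanPhiNeg_sq (hx1 : ‖x‖ < 1) :
    ramanujanPsi x * ramanujanPhiNeg x ^ 2 = qPoch x x ^ 3 := by
  have h := qPoch_neg_mul_qPoch_sq hx1
  rw [ramanujanPsi, ramanujanPhiNeg, qPoch_self_eq hx1]
  linear_combination qPoch x (x ^ 2) ^ 3 * qPoch (x ^ 2) (x ^ 2) ^ 3 *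
    (qPoch (-x) x * qPoch x (x ^ 2) + 1) * h

lemma ramanujanPsi_sq (hx1 : ‖x‖ < 1) :
    ramanujanPsi x ^ 2 = ramanujanPhiNeg (-x) * ramanujanPsi (x ^ 2) := by
  have h2 := norm_pow_lt_one hx1 two_ne_zero
  have h₁ := qPoch_neg_mul_qPoch_sq hx1
  have h₂ := qPoch_neg_mul_qPoch_sq h2
  have h₃ := qPoch_mul_qPoch_neg x h2
  rw [← h₃] at h₂
  rw [ramanujanPsi, ramanujanPhiNeg, ramanujanPsi, neg_sq, qPoch_self_eq hx1]
  have e₁ : qPoch (-x) x = (qPoch x (x ^ 2))⁻¹ := eq_inv_of_mul_eq_one_left h₁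
  have e₂ : qPoch (-x ^ 2) (x ^ 2) = (qPoch x (x ^ 2) * qPoch (-x) (x ^ 2))⁻¹ :=
    eq_inv_of_mul_eq_one_left h₂
  have n₁ : qPoch x (x ^ 2) ≠ 0 := qPoch_ne_zero hx1 h2
  have n₂ : qPoch (-x) (x ^ 2) ≠ 0 := qPoch_ne_zero (by simpa using hx1) h2
  rw [e₁, e₂]
  field_simp

lemma cubicCF_mul_cubicCF_neg (hx1 : ‖x‖ < 1) :
    cubicCF x * cubicCF (-x) = -cubicCF (x ^ 2) := by
  have h (k : ℕ) : qPoch (x ^ k) (x ^ 18) * qPoch (-x ^ k) (x ^ 18) =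
      qPoch ((x ^ 2) ^ k) ((x ^ 2) ^ 18) := by
    rw [qPoch_mul_qPoch_neg _ (norm_pow_lt_one hx1 (by norm_num))]
    ring_nf
  rw [cubicCF, cubicCF, cubicCF, ← h, ← h, ← h, Odd.neg_pow (n := 3) (by decide),
    Odd.neg_pow (n := 15) (by decide), Odd.neg_pow (n := 9) (by decide),
    Even.neg_pow (n := 18) (by decide)]
  ring

lemma one_sub_two_mul_cubicCF (hx : x ≠ 0) (hx1 : ‖x‖ < 1) :
    1 - 2 * cubicCF x = ramanujanPhiNeg x / ramanujanPhiNeg (x ^ 9) := by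
  have h9 := norm_pow_lt_one hx1 (k := 9) (by norm_num)
  have h18 := norm_pow_lt_one hx1 (k := 18) (by norm_num)
  have hx18 : x ^ 18 ≠ 0 := pow_ne_zero _ hx
  rw [eq_div_iff (ramanujanPhiNeg_ne_zero h9), ramanujanPhiNeg_eq_tsum hx hx1,
    tsum_thetaTerm_eq_three_mul (neg_ne_zero.mpr hx) (pow_ne_zero _ hx)
      (norm_pow_lt_one hx1 two_ne_zero),
    show (-x) ^ 3 * (x ^ 2) ^ 3 = -x ^ 9 by ring, show (-x) ^ 3 * (x ^ 2) ^ 6 = -x ^ 15 by ring,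
    show (-x) ^ 3 = -x ^ 3 by ring, show (x ^ 2) ^ 9 = x ^ 18 by ring,
    tsum_thetaTerm_of_mul_eq (b := -x ^ 9) (neg_ne_zero.mpr (pow_ne_zero _ hx)) hx18 h18 (by ring),
    tsum_thetaTerm_of_mul_eq (b := -x ^ 3) (neg_ne_zero.mpr (pow_ne_zero _ hx)) hx18 h18 (by ring),
    tsum_thetaTerm_of_mul_eq (b := -x ^ 15) (neg_ne_zero.mpr (pow_ne_zero _ hx)) hx18 h18 (by ring),
    ramanujanPhiNeg, cubicCF, ← pow_mul]
  have := qPoch_ne_zero h9 h18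
  simp only [neg_neg]
  field_simp
  ring

lemma one_add_inv_cubicCF (hx : x ≠ 0) (hx1 : ‖x‖ < 1) :
    1 + 1 / cubicCF x = ramanujanPsi x / (x * ramanujanPsi (x ^ 9)) := by
  have h3 := norm_pow_lt_one hx1 (k := 3) (by norm_num)
  have h9 := norm_pow_lt_one hx1 (k := 9) (by norm_num)
  have h18 := norm_pow_lt_one hx1 (k := 18) (by norm_num)
  have hx9 : x ^ 9 ≠ 0 := pow_ne_zero _ hx
  have hpsi : 2 * ramanujanPsi x = 2 * (qPoch (x ^ 9) (x ^ 9) * qPoch (-x ^ 3) (x ^ 9) *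
      qPoch (-x ^ 6) (x ^ 9) + x * ramanujanPsi (x ^ 9)) := by
    rw [two_mul_ramanujanPsi hx hx1, tsum_thetaTerm_eq_three_mul hx hx hx1, ← pow_add, ← pow_add,
      ← two_mul_ramanujanPsi hx9 h9,
      tsum_thetaTerm_of_mul_eq (b := x ^ 3) (pow_ne_zero _ hx) hx9 h9 (by ring),
      tsum_thetaTerm_of_mul_eq (b := x ^ 6) (pow_ne_zero _ hx) hx9 h9 (by ring), div_self hx]
    ring
  have hpsi' := mul_left_cancel₀ two_ne_zero hpsi
  have e₁ := qPoch_neg_mul_qPoch_sq h3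
  have e₂ := qPoch_neg_mul_qPoch_sq h9
  rw [qPoch_eq_mul_three _ h3, qPoch_eq_mul_three _ (norm_pow_lt_one h3 two_ne_zero)] at e₁
  ring_nf at e₁ e₂
  have n₁ := ramanujanPsi_ne_zero h9
  have n₂ := qPoch_ne_zero h9 h9
  have n₃ : qPoch (-x ^ 9) (x ^ 9) ≠ 0 := qPoch_ne_zero (by simpa using h9) h9
  have n₄ : qPoch (x ^ 9) (x ^ 18) ≠ 0 := qPoch_ne_zero h9 h18
  have n₅ : qPoch (x ^ 3) (x ^ 18) ≠ 0 := qPoch_ne_zero h3 h18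
  have n₆ : qPoch (x ^ 15) (x ^ 18) ≠ 0 :=
    qPoch_ne_zero (norm_pow_lt_one hx1 (by norm_num)) h18
  rw [hpsi', cubicCF]
  rw [ramanujanPsi] at n₁ ⊢
  field_simp
  linear_combination (qPoch (-x ^ 9) (x ^ 9) * qPoch (x ^ 9) (x ^ 18) + 1 +
    qPoch (-x ^ 3) (x ^ 9) * qPoch (-x ^ 6) (x ^ 9) * qPoch (x ^ 3) (x ^ 18) *
      qPoch (x ^ 15) (x ^ 18)) * e₂ - e₁

/-- The modular equation relating the cubic continued fraction at `x` and `x²`. -/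
lemma cubicCF_sq_add (hx : x ≠ 0) (hx1 : ‖x‖ < 1) :
    cubicCF x ^ 2 + 2 * cubicCF x * cubicCF (x ^ 2) ^ 2 = cubicCF (x ^ 2) := by
  have h2 := norm_pow_lt_one hx1 two_ne_zero
  have h9 := norm_pow_lt_one hx1 (k := 9) (by norm_num)
  have hx2 : x ^ 2 ≠ 0 := pow_ne_zero _ hx
  have h₁ := one_add_inv_cubicCF hx hx1
  have h₂ := one_add_inv_cubicCF hx2 h2
  have h₃ := one_sub_two_mul_cubicCF (neg_ne_zero.mpr hx) (by simpa using hx1)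
  have s₁ := ramanujanPsi_sq hx1
  have s₉ := ramanujanPsi_sq h9
  rw [← pow_mul, mul_comm 9 2, pow_mul] at s₉
  rw [Odd.neg_pow (by decide)] at h₃
  have key : (1 + 1 / cubicCF x) ^ 2 = (1 - 2 * cubicCF (-x)) * (1 + 1 / cubicCF (x ^ 2)) := by
    rw [h₁, h₂, h₃, div_pow, mul_pow, s₁, s₉, div_mul_div_comm]
    ring
  have hv := cubicCF_ne_zero hx hx1
  have hw := cubicCF_ne_zero hx2 h2
  have hneg : cubicCF (-x) = -cubicCF (x ^ 2) / cubicCF x := by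
    rw [← cubicCF_mul_cubicCF_neg hx1, mul_div_cancel_left₀ _ hv]
  rw [hneg] at key
  field_simp at key
  linear_combination -key

lemma cubicCF_cubic (hx : x ≠ 0) (hx1 : ‖x‖ < 1) :
    1 / cubicCF x + 4 * cubicCF x ^ 2 = 3 + qPoch x x ^ 3 / (x * qPoch (x ^ 9) (x ^ 9) ^ 3) := by
  have h9 := norm_pow_lt_one hx1 (k := 9) (by norm_num)
  have hv := cubicCF_ne_zero hx hx1
  rw [← ramanujanPsi_mul_ramanujanPhiNeg_sq hx1, ← ramanujanPsi_mul_ramanujanPhiNeg_sq h9,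
    ← mul_assoc, ← div_mul_div_comm, ← div_pow, ← one_sub_two_mul_cubicCF hx hx1,
    ← one_add_inv_cubicCF hx hx1]
  field_simp
  ring

lemma norm_exp_two_pi_I_div_three_lt_one {τ : ℂ} (hτ : 0 < τ.im) :
    ‖exp (2 * Real.pi * I * τ / 3)‖ < 1 := by
  rw [norm_exp, Real.exp_lt_one_iff]
  simp only [div_ofNat_re, mul_re, re_ofNat, ofReal_re, im_ofNat, ofReal_im, mul_zero, sub_zero,
    I_re, mul_im, zero_mul, add_zero, I_im, mul_one, sub_self, zero_sub]
  have := mul_pos Real.pi_pos hτ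
  linarith

lemma c_eq_cubicCF {τ : ℂ} (hτ : 0 < τ.im) : c τ = cubicCF (exp (2 * Real.pi * I * τ / 3)) := by
  set x := exp (2 * Real.pi * I * τ / 3) with hx
  have hnome : nome τ = x ^ 3 := by
    rw [nome, hx, ← exp_nat_mul]
    congr 1
    push_cast
    ring
  have hx1 : ‖x‖ < 1 := norm_exp_two_pi_I_div_three_lt_one hτ
  have h18 := norm_pow_lt_one hx1 (k := 18) (by norm_num)
  have hm (k : ℕ) := multipliable_qPoch (x ^ k) h18
  rw [c, cubicCF, ← hx, hnome]
  congr 1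
  rw [sq, qPoch, qPoch, qPoch, ← (hm 3).tprod_mul (hm 15), ← (hm 9).tprod_mul (hm 9),
    ← ((hm 3).mul (hm 15)).tprod_div₀ ((hm 9).mul (hm 9))]
  · congr 1 with n
    simp only [← pow_mul, ← pow_add, ← sq]
    rw [show 3 * (6 * (n + 1) - 1) = 15 + 18 * n by lia,
      show 3 * (6 * (n + 1) - 5) = 3 + 18 * n by lia,
      show 3 * (6 * (n + 1) - 3) = 9 + 18 * n by lia]
    ring
  · rw [(hm 9).tprod_mul (hm 9)]
    have h9 : qPoch (x ^ 9) (x ^ 18) ≠ 0 :=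
      qPoch_ne_zero (norm_pow_lt_one hx1 (by norm_num)) h18
    exact mul_ne_zero h9 h9

lemma dedekindEta_eq (τ : ℂ) : dedekindEta τ = exp (Real.pi * I * τ / 12) *
    qPoch (exp (2 * Real.pi * I * τ)) (exp (2 * Real.pi * I * τ)) := by
  rw [dedekindEta, qPoch]
  congr 3 with n
  rw [← exp_nat_mul, ← exp_add]
  ring_nf

lemma beta_eq {τ : ℂ} {x : ℂ} (hx : x = exp (2 * Real.pi * I * τ / 3)) :
    beta τ = 3 + qPoch x x ^ 3 / (x * qPoch (x ^ 9) (x ^ 9) ^ 3) := by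
  have e₁ : exp (2 * Real.pi * I * (τ / 3)) = x := by rw [hx]; ring_nf
  have e₂ : exp (2 * Real.pi * I * (3 * τ)) = x ^ 9 := by
    rw [hx, ← exp_nat_mul]
    push_cast
    ring_nf
  have e₃ : exp (Real.pi * I * (3 * τ) / 12) ^ 3 = exp (Real.pi * I * (τ / 3) / 12) ^ 3 * x := by
    rw [hx, ← exp_nat_mul, ← exp_nat_mul, ← exp_add]
    push_cast
    ring_nf
  rw [beta, dedekindEta_eq, dedekindEta_eq, e₁, e₂, mul_pow, mul_pow, e₃,
    mul_assoc (_ ^ 3), mul_div_mul_left _ _ (pow_ne_zero _ (exp_ne_zero _))]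

end CubicContinuedFraction

/-- For `τ` in the upper half-plane, `c(τ) ≠ 0`, `c₁(τ/2) ≠ 0`, and the three roots of
`4x³ − β(τ)x + 1` are exactly `c(τ)`, `c₁(τ/2)/(2c(τ))` and `−1/(2c₁(τ/2))`. -/
theorem cubicCF_three_roots (τ : ℂ) (hτ : 0 < τ.im) :
    c τ ≠ 0 ∧ c₁ (τ / 2) ≠ 0 ∧
    ∀ z : ℂ, 4 * z ^ 3 - beta τ * z + 1 =
      4 * (z - c τ) * (z - c₁ (τ / 2) / (2 * c τ)) * (z + 1 / (2 * c₁ (τ / 2))) := by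
  set y := exp (2 * Real.pi * I * (τ / 2 + 3 / 2) / 3) with hy
  have him : 0 < (τ / 2 + 3 / 2).im := by
    simpa using hτ
  have hy0 : y ≠ 0 := exp_ne_zero _
  have hy1 : ‖y‖ < 1 := norm_exp_two_pi_I_div_three_lt_one him
  have hxy : y ^ 2 = exp (2 * Real.pi * I * τ / 3) := by
    rw [hy, ← exp_nat_mul, ← exp_periodic (2 * Real.pi * I * τ / 3)]
    push_cast
    ring_nf
  have hx0 : y ^ 2 ≠ 0 := pow_ne_zero _ hy0
  have hx1 : ‖y ^ 2‖ < 1 := norm_pow_lt_one hy1 two_ne_zero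
  rw [c₁, c_eq_cubicCF hτ, c_eq_cubicCF him, ← hy, ← hxy, beta_eq hxy, ← cubicCF_cubic hx0 hx1]
  have hv := cubicCF_ne_zero hy0 hy1
  have hw := cubicCF_ne_zero hx0 hx1
  have hmod := cubicCF_sq_add hy0 hy1
  refine ⟨hw, hv, fun z ↦ ?_⟩
  generalize cubicCF y = v at *
  generalize cubicCF (y ^ 2) = w at *
  field_simp
  linear_combination (8 * z ^ 2 - 8 * z * w) * hmod
end

section
/- For every matrix γ = (a, b; r, s) in SL₂(ℤ) that is congruent to the identity matrix modulo 6, and every τ in the complex upper half-plane, c((aτ + b)/(rτ + s)) = c(τ); i.e., c is invariant under the principal congruence subgroup Γ(6). Moreover, for every γ = (a, b; r, s) ∈ SL₂(ℤ) with a ≡ s ≡ 1 (mod 6) and r ≡ 0 (mod 6), one has c((aτ + b)/(rτ + s))³ = c(τ)³; i.e., c³ is invariant under Γ₁(6). -/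
open Complex

open Filter Topology
open scoped Real

/-- `1 / ((1 - q) ⋯ (1 - q ^ m))`, extended by zero to negative integers `m`. -/
noncomputable def qFactorialInv (q : ℂ) (m : ℤ) : ℂ :=
  if m < 0 then 0 else (∏ i ∈ Finset.range m.toNat, (1 - q ^ (i + 1)))⁻¹

lemma qFactorialInv_of_neg (q : ℂ) {m : ℤ} (hm : m < 0) : qFactorialInv q m = 0 := if_pos hm

lemma qFactorialInv_natCast (q : ℂ) (n : ℕ) :
    qFactorialInv q n = (∏ i ∈ Finset.range n, (1 - q ^ (i + 1)))⁻¹ := by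
  simp [qFactorialInv]

lemma one_sub_pow_succ_ne_zero_s14 {q : ℂ} (hq : ‖q‖ < 1) (n : ℕ) : 1 - q ^ (n + 1) ≠ 0 := by
  intro h
  have h1 : ‖q ^ (n + 1)‖ < 1 := by
    rw [norm_pow]
    exact pow_lt_one₀ (norm_nonneg _) hq n.succ_ne_zero
  rw [← sub_eq_zero.mp h] at h1
  simp at h1

lemma qFactorialInv_sub_one {q : ℂ} (hq : ‖q‖ < 1) (m : ℤ) :
    qFactorialInv q (m - 1) = (1 - q ^ m) * qFactorialInv q m := by
  rcases lt_trichotomy m 0 with hm | rfl | hm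
  · rw [qFactorialInv_of_neg q hm, qFactorialInv_of_neg q (by lia), mul_zero]
  · simp [qFactorialInv_of_neg]
  · obtain ⟨n, rfl⟩ : ∃ n : ℕ, m = (n + 1 : ℕ) := ⟨(m - 1).toNat, by lia⟩
    have hn := one_sub_pow_succ_ne_zero_s14 hq n
    rw [show ((n + 1 : ℕ) : ℤ) - 1 = n by simp, qFactorialInv_natCast, qFactorialInv_natCast,
      zpow_natCast, Finset.prod_range_succ, mul_inv]
    field_simp

lemma tprod_one_sub_pow_ne_zero {q : ℂ} (hq : ‖q‖ < 1) : ∏' n : ℕ, (1 - q ^ (n + 1)) ≠ 0 := by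
  simp_rw [sub_eq_add_neg]
  refine tprod_one_add_ne_zero_of_summable (fun n ↦ ?_) ?_
  · simpa [sub_eq_add_neg] using one_sub_pow_succ_ne_zero_s14 hq n
  · simpa using (summable_nat_add_iff 1).mpr (summable_geometric_of_lt_one (norm_nonneg _) hq)

lemma tendsto_prod_one_sub_pow {q : ℂ} (hq : ‖q‖ < 1) :
    Tendsto (fun n ↦ ∏ i ∈ Finset.range n, (1 - q ^ (i + 1))) atTop
      (𝓝 (∏' n : ℕ, (1 - q ^ (n + 1)))) :=
  (ModularForm.multipliable_one_sub_pow hq).hasProd.tendsto_prod_nat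

lemma tendsto_qFactorialInv {q : ℂ} (hq : ‖q‖ < 1) :
    Tendsto (qFactorialInv q) atTop (𝓝 (∏' n : ℕ, (1 - q ^ (n + 1)))⁻¹) := by
  have h := (tendsto_prod_one_sub_pow hq).inv₀ (tprod_one_sub_pow_ne_zero hq)
  have ht : Tendsto Int.toNat atTop atTop :=
    tendsto_atTop_atTop.mpr fun n ↦ ⟨n, fun m hm ↦ by lia⟩
  refine (h.comp ht).congr' ?_
  filter_upwards [eventually_ge_atTop 0] with m hm
  simp [qFactorialInv, not_lt.mpr hm]

lemma exists_norm_qFactorialInv_le {q : ℂ} (hq : ‖q‖ < 1) :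
    ∃ M, ∀ m, ‖qFactorialInv q m‖ ≤ M := by
  have h : Tendsto (fun n : ℕ ↦ qFactorialInv q n) atTop _ :=
    (tendsto_qFactorialInv hq).comp tendsto_natCast_atTop_atTop
  obtain ⟨M, hM⟩ := h.norm.bddAbove_range
  refine ⟨M, fun m ↦ ?_⟩
  have hn (n : ℕ) : ‖qFactorialInv q n‖ ≤ M := hM ⟨n, rfl⟩
  rcases lt_or_ge m 0 with hm | hm
  · rw [qFactorialInv_of_neg q hm, norm_zero]
    exact (norm_nonneg _).trans (hn 0)
  · lift m to ℕ using hm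
    exact hn m

/-- The finite form of the Jacobi triple product identity. -/
lemma hasSum_finite_tripleProduct {Q y : ℂ} (hQ : ‖Q‖ < 1) (hQ0 : Q ≠ 0) (hy : y ≠ 0) (n : ℕ) :
    HasSum (fun k : ℤ ↦ (∏ i ∈ Finset.range (2 * n), (1 - (Q ^ 2) ^ (i + 1))) *
        (qFactorialInv (Q ^ 2) (n + k) * qFactorialInv (Q ^ 2) (n - k)) * (Q ^ (k ^ 2) * y ^ k))
      (∏ m ∈ Finset.range n, ((1 + Q ^ (2 * m + 1) * y) * (1 + Q ^ (2 * m + 1) / y))) := by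
  have hq : ‖Q ^ 2‖ < 1 := by
    rw [norm_pow]
    exact pow_lt_one₀ (norm_nonneg _) hQ two_ne_zero
  induction n with
  | zero =>
    have h0 : qFactorialInv (Q ^ 2) 0 = 1 := by simpa using qFactorialInv_natCast (Q ^ 2) 0
    convert hasSum_single (0 : ℤ) ?_ using 1
    · simp [h0]
    · intro k hk
      rcases lt_or_gt_of_ne hk with hk | hk
      · simp [qFactorialInv_of_neg _ hk]
      · simp [qFactorialInv_of_neg _ (neg_lt_zero.mpr hk)]
  | succ n ih =>
    have hl := ((Equiv.subRight (1 : ℤ)).hasSum_iff.mpr ih).mul_left (Q ^ (2 * n + 1) * y)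
    have hr := ((Equiv.addRight (1 : ℤ)).hasSum_iff.mpr ih).mul_left (Q ^ (2 * n + 1) / y)
    have hsum := ((ih.mul_left (1 + Q ^ (4 * n + 2))).add hl).add hr
    rw [Finset.prod_range_succ]
    refine (congrArg₂ (HasSum · ·) (funext fun k ↦ ?_) ?_).mpr hsum
    · simp only [Function.comp_apply, Equiv.coe_addRight, Equiv.subRight_apply]
      set A := qFactorialInv (Q ^ 2) (n + 1 + k) with hA
      set B := qFactorialInv (Q ^ 2) (n + 1 - k) with hB
      set u := (Q ^ 2) ^ ((n : ℤ) + 1 + k) with hu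
      set v := (Q ^ 2) ^ ((n : ℤ) + 1 - k) with hv
      have hq0 : Q ^ 2 ≠ 0 := pow_ne_zero 2 hQ0
      have a1 : qFactorialInv (Q ^ 2) (n + k) = (1 - u) * A := by
        rw [hu, hA, ← qFactorialInv_sub_one hq]; congr 1; ring
      have b1 : qFactorialInv (Q ^ 2) (n - k) = (1 - v) * B := by
        rw [hv, hB, ← qFactorialInv_sub_one hq]; congr 1; ring
      have a2 : qFactorialInv (Q ^ 2) (n + (k - 1)) = (1 - u / Q ^ 2) * ((1 - u) * A) := by
        rw [← a1, hu, div_eq_mul_inv, ← zpow_sub_one₀ hq0, show (n : ℤ) + 1 + k - 1 = n + k by ring,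
          ← qFactorialInv_sub_one hq]
        congr 1; ring
      have b2 : qFactorialInv (Q ^ 2) (n - (k + 1)) = (1 - v / Q ^ 2) * ((1 - v) * B) := by
        rw [← b1, hv, div_eq_mul_inv, ← zpow_sub_one₀ hq0, show (n : ℤ) + 1 - k - 1 = n - k by ring,
          ← qFactorialInv_sub_one hq]
        congr 1; ring
      have a3 : qFactorialInv (Q ^ 2) (n + (k + 1)) = A := by rw [hA]; congr 1; ring
      have b3 : qFactorialInv (Q ^ 2) (n - (k - 1)) = B := by rw [hB]; congr 1; ring
      have huv : u * v = Q ^ (4 * n + 4) := by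
        rw [hu, hv, ← zpow_add₀ hq0, ← zpow_natCast Q 2, ← zpow_mul, ← zpow_natCast]
        congr 1; push_cast; ring
      have e1 : Q ^ (2 * n + 1) * y * (Q ^ ((k - 1) ^ 2) * y ^ (k - 1)) =
          v * (Q ^ (k ^ 2) * y ^ k) := by
        rw [hv, zpow_sub_one₀ hy, ← zpow_natCast Q 2, ← zpow_mul, ← zpow_natCast Q (2 * n + 1)]
        have : Q ^ ((2 * n + 1 : ℕ) : ℤ) * Q ^ ((k - 1) ^ 2) =
            Q ^ (((2 : ℕ) : ℤ) * (n + 1 - k)) * Q ^ (k ^ 2) := by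
          rw [← zpow_add₀ hQ0, ← zpow_add₀ hQ0]; congr 1; push_cast; ring
        field_simp
        linear_combination this
      have e2 : Q ^ (2 * n + 1) / y * (Q ^ ((k + 1) ^ 2) * y ^ (k + 1)) =
          u * (Q ^ (k ^ 2) * y ^ k) := by
        rw [hu, zpow_add_one₀ hy, ← zpow_natCast Q 2, ← zpow_mul, ← zpow_natCast Q (2 * n + 1)]
        have : Q ^ ((2 * n + 1 : ℕ) : ℤ) * Q ^ ((k + 1) ^ 2) =
            Q ^ (((2 : ℕ) : ℤ) * (n + 1 + k)) * Q ^ (k ^ 2) := by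
          rw [← zpow_add₀ hQ0, ← zpow_add₀ hQ0]; congr 1; push_cast; ring
        field_simp
        linear_combination this
      have hp1 : (Q ^ 2) ^ (2 * n + 1) = u * v / Q ^ 2 := by
        rw [huv]; field_simp; ring
      have hp2 : (Q ^ 2) ^ (2 * n + 1 + 1) = u * v := by
        rw [huv]; ring
      have hp3 : Q ^ (4 * n + 2) = u * v / Q ^ 2 := by
        rw [huv]; field_simp; ring
      rw [show 2 * (n + 1) = 2 * n + 1 + 1 by ring, Finset.prod_range_succ,
        Finset.prod_range_succ, a1, a2, a3, b1, b2, b3, hp1, hp2, hp3]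
      push_cast
      rw [← hA, ← hB]
      set p := ∏ i ∈ Finset.range (2 * n), (1 - (Q ^ 2) ^ (i + 1))
      generalize Q ^ (k ^ 2) * y ^ k = t at e1 e2 ⊢
      linear_combination -(p * ((1 - u / Q ^ 2) * ((1 - u) * A) * B)) * e1 -
        (p * (A * ((1 - v / Q ^ 2) * ((1 - v) * B)))) * e2
    · field_simp
      ring_nf

/-- The Jacobi triple product identity. -/
theorem jacobiTheta₂_eq_tprod (z : ℂ) {τ : ℂ} (hτ : 0 < τ.im) :
    jacobiTheta₂ z τ = (∏' n : ℕ, (1 - (exp (π * I * τ) ^ 2) ^ (n + 1))) *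
      ∏' m : ℕ, ((1 + exp (π * I * τ) ^ (2 * m + 1) * exp (2 * π * I * z)) *
        (1 + exp (π * I * τ) ^ (2 * m + 1) / exp (2 * π * I * z))) := by
  set Q := exp (π * I * τ) with hQdef
  set y := exp (2 * π * I * z) with hydef
  have hQ : ‖Q‖ < 1 := by
    rw [hQdef, Complex.norm_exp, Real.exp_lt_one_iff]
    simpa using mul_pos Real.pi_pos hτ
  have hq : ‖Q ^ 2‖ < 1 := by
    rw [norm_pow]
    exact pow_lt_one₀ (norm_nonneg _) hQ two_ne_zero
  have hQ0 : Q ≠ 0 := Complex.exp_ne_zero _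
  have hy : y ≠ 0 := Complex.exp_ne_zero _
  have hterm (k : ℤ) : Q ^ (k ^ 2) * y ^ k = jacobiTheta₂_term k z τ := by
    rw [hQdef, hydef, ← Complex.exp_int_mul, ← Complex.exp_int_mul, ← Complex.exp_add,
      jacobiTheta₂_term]
    congr 1
    push_cast
    ring
  obtain ⟨M, hM⟩ := exists_norm_qFactorialInv_le hq
  have hM0 : 0 ≤ M := (norm_nonneg _).trans (hM 0)
  have hp := tendsto_prod_one_sub_pow hq
  have hp2 : Tendsto (fun n ↦ ∏ i ∈ Finset.range (2 * n), (1 - (Q ^ 2) ^ (i + 1))) atTop _ :=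
    hp.comp (tendsto_id.const_mul_atTop' two_pos)
  obtain ⟨N, hN⟩ := hp.norm.bddAbove_range
  have hP0 := tprod_one_sub_pow_ne_zero hq
  set P := ∏' n : ℕ, (1 - (Q ^ 2) ^ (n + 1))
  have hlim : Tendsto
      (fun n : ℕ ↦ ∏ m ∈ Finset.range n, ((1 + Q ^ (2 * m + 1) * y) * (1 + Q ^ (2 * m + 1) / y)))
      atTop (𝓝 (∑' k : ℤ, P * (P⁻¹ * P⁻¹) * jacobiTheta₂_term k z τ)) := by
    simp_rw [← fun n ↦ (hasSum_finite_tripleProduct hQ hQ0 hy n).tsum_eq, hterm]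
    refine tendsto_tsum_of_dominated_convergence
      (((summable_jacobiTheta₂_term_iff z τ).mpr hτ).norm.mul_left (N * (M * M))) (fun k ↦ ?_)
      (.of_forall fun n k ↦ ?_)
    · have h1 : Tendsto (fun n : ℕ ↦ (n : ℤ) + k) atTop atTop :=
        tendsto_atTop_add_const_right _ _ tendsto_natCast_atTop_atTop
      have h2 : Tendsto (fun n : ℕ ↦ (n : ℤ) - k) atTop atTop := by
        simpa [sub_eq_add_neg] using
          tendsto_atTop_add_const_right atTop (-k) (tendsto_natCast_atTop_atTop (R := ℤ))
      exact (hp2.mul (((tendsto_qFactorialInv hq).comp h1).mul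
        ((tendsto_qFactorialInv hq).comp h2))).mul_const _
    · rw [norm_mul, norm_mul, norm_mul]
      gcongr
      · exact (norm_nonneg _).trans (hN ⟨0, rfl⟩)
      · exact hN ⟨2 * n, rfl⟩
      · exact hM _
      · exact hM _
  have hs (a : ℂ) : Summable fun m : ℕ ↦ ‖Q ^ (2 * m + 1) * a‖ := by
    have := (summable_geometric_of_lt_one (norm_nonneg _) hq).mul_right ‖Q * a‖
    refine this.congr fun m ↦ ?_
    rw [← norm_pow, ← norm_mul]
    congr 1
    ring
  have hmul : Multipliable
      fun m : ℕ ↦ (1 + Q ^ (2 * m + 1) * y) * (1 + Q ^ (2 * m + 1) / y) := by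
    simp_rw [div_eq_mul_inv]
    exact (multipliable_one_add_of_summable (hs y)).mul (multipliable_one_add_of_summable (hs y⁻¹))
  rw [tendsto_nhds_unique hmul.hasProd.tendsto_prod_nat hlim, tsum_mul_left, jacobiTheta₂]
  field_simp

/-- The odd Jacobi theta function, up to a factor depending only on `τ`. -/
noncomputable def oddTheta (z τ : ℂ) : ℂ :=
  exp (π * I * z) * jacobiTheta₂ (z + 1 / 2 + τ / 2) τ

lemma oddTheta_add_one (z τ : ℂ) : oddTheta (z + 1) τ = -oddTheta z τ := by
  rw [oddTheta, show z + 1 + 1 / 2 + τ / 2 = z + 1 / 2 + τ / 2 + 1 by ring,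
    jacobiTheta₂_add_left, mul_add, mul_one, exp_add, exp_pi_mul_I, oddTheta]
  ring

lemma oddTheta_add_period (z τ : ℂ) :
    oddTheta (z + τ) τ = -exp (-π * I * τ - 2 * π * I * z) * oddTheta z τ := by
  have h : exp (π * I * (z + τ)) * exp (-π * I * (τ + 2 * (z + 1 / 2 + τ / 2))) =
      -exp (-π * I * τ - 2 * π * I * z) * exp (π * I * z) := by
    rw [← exp_add, show π * I * (z + τ) + -π * I * (τ + 2 * (z + 1 / 2 + τ / 2)) =
      -π * I * τ - 2 * π * I * z + π * I * z - π * I by ring, exp_sub, exp_pi_mul_I, exp_add]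
    ring
  rw [oddTheta, show z + τ + 1 / 2 + τ / 2 = z + 1 / 2 + τ / 2 + τ by ring,
    jacobiTheta₂_add_left', oddTheta, ← mul_assoc, h, mul_assoc]

lemma oddTheta_add_intCast (z τ : ℂ) (n : ℤ) :
    oddTheta (z + n) τ = (-1) ^ n * oddTheta z τ := by
  induction n using Int.induction_on generalizing z with
  | zero => simp
  | succ n ih =>
    rw [show z + ((n + 1 : ℤ) : ℂ) = z + 1 + (n : ℤ) by push_cast; ring, ih, oddTheta_add_one,
      zpow_add_one₀ (by simp)]
    ring
  | pred n ih =>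
    have h := oddTheta_add_one (z - 1) τ
    rw [sub_add_cancel] at h
    rw [show z + ((-n - 1 : ℤ) : ℂ) = z - 1 + (-n : ℤ) by push_cast; ring, ih, h,
      zpow_sub_one₀ (by simp)]
    simp

lemma oddTheta_add_int_mul_period (z τ : ℂ) (m : ℤ) :
    oddTheta (z + m * τ) τ =
      (-1) ^ m * exp (-π * I * m ^ 2 * τ - 2 * π * I * m * z) * oddTheta z τ := by
  have key (w : ℂ) (k : ℂ) : exp (-π * I * k ^ 2 * τ - 2 * π * I * k * (w + τ)) *
      exp (-π * I * τ - 2 * π * I * w) =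
      exp (-π * I * (k + 1) ^ 2 * τ - 2 * π * I * (k + 1) * w) := by
    rw [← exp_add]
    ring_nf
  induction m using Int.induction_on generalizing z with
  | zero => simp
  | succ m ih =>
    rw [show z + ((m + 1 : ℤ) : ℂ) * τ = z + τ + (m : ℤ) * τ by push_cast; ring, ih,
      oddTheta_add_period, zpow_add_one₀ (by simp), Int.cast_add, Int.cast_one, ← key]
    ring
  | pred m ih =>
    have h := oddTheta_add_period (z - τ) τ
    have h2 := key (z - τ) ((-m - 1 : ℤ) : ℂ)
    rw [sub_add_cancel] at h h2
    rw [show (((-m - 1 : ℤ) : ℂ) + 1) = ((-m : ℤ) : ℂ) by push_cast; ring] at h2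
    rw [show z + ((-m - 1 : ℤ) : ℂ) * τ = z - τ + (-m : ℤ) * τ by push_cast; ring, ih, h,
      zpow_sub_one₀ (by simp), ← h2]
    have h3 : exp (-π * I * τ - 2 * π * I * (z - τ)) ≠ 0 := exp_ne_zero _
    field_simp

lemma jacobiTheta₂_add_one_right (z τ : ℂ) :
    jacobiTheta₂ z (τ + 1) = jacobiTheta₂ (z + 1 / 2) τ := by
  refine tsum_congr fun n ↦ ?_
  rw [jacobiTheta₂_term, jacobiTheta₂_term, exp_eq_exp_iff_exists_int]
  obtain ⟨k, hk⟩ := Int.even_mul_pred_self n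
  refine ⟨k, ?_⟩
  have hk' : (n : ℂ) * (n - 1) = k + k := by exact_mod_cast hk
  linear_combination π * I * hk'

lemma oddTheta_add_one_right (z τ : ℂ) : oddTheta z (τ + 1) = oddTheta z τ := by
  rw [oddTheta, jacobiTheta₂_add_one_right, oddTheta,
    show z + 1 / 2 + (τ + 1) / 2 + 1 / 2 = z + 1 / 2 + τ / 2 + 1 by ring, jacobiTheta₂_add_left]

lemma exists_oddTheta_neg_one_div {τ : ℂ} (hτ : τ ≠ 0) :
    ∃ ε : ℂ, ε ≠ 0 ∧ ∀ z,
      oddTheta (z / τ) (-1 / τ) = ε * exp (π * I * z ^ 2 / τ) * oddTheta z τ := by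
  have hK : (-I * τ) ^ (1 / 2 : ℂ) ≠ 0 := by
    rw [Ne, cpow_eq_zero_iff]
    simp [hτ]
  refine ⟨(-I * τ) ^ (1 / 2 : ℂ) * exp (π * I * ((τ - 1) ^ 2 / (4 * τ))),
    mul_ne_zero hK (exp_ne_zero _), fun z ↦ ?_⟩
  rw [oddTheta, oddTheta, show z + 1 / 2 + τ / 2 = z + (τ - 1) / 2 + 1 by ring,
    jacobiTheta₂_add_left, jacobiTheta₂_functional_equation (z + (τ - 1) / 2) τ,
    show (z + (τ - 1) / 2) / τ = z / τ + 1 / 2 + -1 / τ / 2 by field_simp; ring]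
  have h : exp (π * I * ((τ - 1) ^ 2 / (4 * τ))) * exp (π * I * z ^ 2 / τ) *
      exp (π * I * z) * exp (-π * I * (z + (τ - 1) / 2) ^ 2 / τ) = exp (π * I * (z / τ)) := by
    rw [← exp_add, ← exp_add, ← exp_add]
    congr 1
    field_simp
    ring
  rw [← h]
  field_simp

open ModularGroup MatrixGroups in
open UpperHalfPlane hiding I in
open scoped UpperHalfPlane in
/-- The transformation law of `oddTheta` under `SL₂(ℤ)`, with unspecified multiplier. -/
theorem exists_oddTheta_smul (g : SL(2, ℤ)) (τ : ℍ) :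
    ∃ ε : ℂ, ε ≠ 0 ∧ ∀ z, oddTheta (z / (g 1 0 * τ + g 1 1)) ↑(g • τ) =
      ε * exp (π * I * (g 1 0 * z ^ 2 / (g 1 0 * τ + g 1 1))) * oddTheta z τ := by
  have hcoe (g : SL(2, ℤ)) (τ : ℍ) :
      ((g • τ : ℍ) : ℂ) = (g 0 0 * τ + g 0 1) / (g 1 0 * τ + g 1 1) := by
    rw [coe_specialLinearGroup_apply]
    simp
  have hne (g : SL(2, ℤ)) (τ : ℍ) : (g 1 0 : ℂ) * τ + g 1 1 ≠ 0 := by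
    simpa [denom_apply] using denom_ne_zero (g : GL (Fin 2) ℝ) τ
  have hdet (g : SL(2, ℤ)) : (g 0 0 : ℂ) * g 1 1 - g 0 1 * g 1 0 = 1 := by
    have := g.det_coe
    rw [Matrix.det_fin_two] at this
    exact_mod_cast this
  have hg : g ∈ Subgroup.closure {S, T} := by
    rw [SpecialLinearGroup.SL2Z_generators]
    trivial
  induction hg using Subgroup.closure_induction generalizing τ with
  | mem x hx =>
    rcases hx with rfl | rfl
    · obtain ⟨ε, hε, h⟩ := exists_oddTheta_neg_one_div τ.ne_zero
      refine ⟨ε, hε, fun z ↦ ?_⟩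
      have := h z
      rw [hcoe]
      simpa [S, mul_div_assoc] using this
    · refine ⟨1, one_ne_zero, fun z ↦ ?_⟩
      rw [hcoe]
      simpa [T] using oddTheta_add_one_right z τ
  | one => exact ⟨1, one_ne_zero, fun z ↦ by simp⟩
  | mul x y _ _ hx hy =>
    obtain ⟨ε₁, hε₁, h₁⟩ := hx (y • τ)
    obtain ⟨ε₂, hε₂, h₂⟩ := hy τ
    refine ⟨ε₁ * ε₂, mul_ne_zero hε₁ hε₂, fun z ↦ ?_⟩
    have hj : ((x * y) 1 0 : ℂ) * τ + (x * y) 1 1 =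
        (x 1 0 * ((y • τ : ℍ) : ℂ) + x 1 1) * (y 1 0 * τ + y 1 1) := by
      have := hne y τ
      rw [hcoe]
      simp only [Matrix.SpecialLinearGroup.coe_mul, Matrix.mul_apply, Fin.sum_univ_two]
      push_cast
      field_simp
      ring
    have hc : ((x * y) 1 0 : ℂ) * (y 1 0 * τ + y 1 1) =
        x 1 0 + y 1 0 * ((x * y) 1 0 * τ + (x * y) 1 1) := by
      simp only [Matrix.SpecialLinearGroup.coe_mul, Matrix.mul_apply, Fin.sum_univ_two]
      push_cast
      linear_combination (x 1 0 : ℂ) * hdet y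
    have h := h₁ (z / (y 1 0 * τ + y 1 1))
    rw [h₂, div_div, mul_comm (_ + _), ← hj, ← mul_smul] at h
    rw [h]
    have hy0 := hne y τ
    have hxy0 := hne (x * y) τ
    have he : (x 1 0 : ℂ) * (z / (y 1 0 * τ + y 1 1)) ^ 2 / (x 1 0 * ((y • τ : ℍ) : ℂ) + x 1 1) +
        y 1 0 * z ^ 2 / (y 1 0 * τ + y 1 1) =
        (x * y) 1 0 * z ^ 2 / ((x * y) 1 0 * τ + (x * y) 1 1) := by
      rw [((eq_div_iff hy0).mpr hj.symm)]
      generalize ((x * y) 1 0 : ℂ) * τ + (x * y) 1 1 = d at *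
      field_simp
      linear_combination -z ^ 2 * hc
    rw [← he, mul_add, exp_add]
    ring
  | inv x _ hx =>
    obtain ⟨ε, hε, h⟩ := hx (x⁻¹ • τ)
    refine ⟨ε⁻¹, inv_ne_zero hε, fun z ↦ ?_⟩
    have hj : ((x⁻¹ 1 0 : ℤ) : ℂ) * τ + (x⁻¹ 1 1 : ℤ) =
        (x 1 0 * ((x⁻¹ • τ : ℍ) : ℂ) + x 1 1)⁻¹ := by
      have h0 := hne x⁻¹ τ
      refine eq_inv_of_mul_eq_one_left ?_
      rw [hcoe, mul_add, mul_left_comm, mul_div_cancel₀ _ h0]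
      simp only [Matrix.SpecialLinearGroup.SL2_inv_expl, Matrix.cons_val', Matrix.cons_val_zero,
        Matrix.cons_val_one, Matrix.cons_val_fin_one]
      push_cast
      linear_combination hdet x
    have hc : ((x⁻¹ 1 0 : ℤ) : ℂ) = -x 1 0 := by
      simp [Matrix.SpecialLinearGroup.SL2_inv_expl]
    have hx0 := hne x (x⁻¹ • τ)
    have h := h (z * (x 1 0 * ((x⁻¹ • τ : ℍ) : ℂ) + x 1 1))
    rw [mul_div_cancel_right₀ _ hx0, smul_inv_smul] at h
    rw [hj, hc, h, div_inv_eq_mul, div_inv_eq_mul]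
    generalize (x 1 0 : ℂ) * ((x⁻¹ • τ : ℍ) : ℂ) + x 1 1 = d at *
    have he : exp (π * I * (-x 1 0 * z ^ 2 * d)) *
        exp (π * I * (x 1 0 * (z * d) ^ 2 / d)) = 1 := by
      rw [← exp_add, exp_eq_one_iff]
      exact ⟨0, by field_simp; push_cast; ring⟩
    linear_combination -(oddTheta (z * d) ((x⁻¹ • τ : ℍ) : ℂ) * ε⁻¹ * ε) * he -
      oddTheta (z * d) ((x⁻¹ • τ : ℍ) : ℂ) * inv_mul_cancel₀ hε

lemma nome_pow (τ : ℂ) (n : ℕ) : nome τ ^ n = exp (2 * π * I * n * τ) := by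
  rw [nome, ← exp_nat_mul]
  ring_nf

lemma norm_nome_lt_one {τ : ℂ} (hτ : 0 < τ.im) : ‖nome τ‖ < 1 := by
  exact UpperHalfPlane.norm_exp_two_pi_I_lt_one ⟨τ, hτ⟩

lemma oddTheta_neg_natCast_mul {τ : ℂ} (hτ : 0 < τ.im) {g : ℕ} (hg : g ≤ 6) :
    oddTheta (-g * τ) (6 * τ) =
      exp (-(π * I * g * τ)) * (∏' n : ℕ, (1 - (exp (π * I * (6 * τ)) ^ 2) ^ (n + 1))) *
        ∏' m : ℕ, ((1 - nome τ ^ (6 * (m + 1) - g)) * (1 - nome τ ^ (6 * m + g))) := by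
  have h6 : 0 < (6 * τ).im := by simpa using hτ
  rw [oddTheta, jacobiTheta₂_eq_tprod _ h6, ← mul_assoc,
    show π * I * (-g * τ) = -(π * I * g * τ) by ring]
  congr 1
  refine tprod_congr fun m ↦ ?_
  have hy : exp (2 * π * I * (-g * τ + 1 / 2 + 6 * τ / 2)) =
      -exp (2 * π * I * ((3 - g) * τ)) := by
    rw [show 2 * π * I * (-g * τ + 1 / 2 + 6 * τ / 2) = 2 * π * I * ((3 - g) * τ) + π * I by ring,
      exp_add, exp_pi_mul_I, mul_neg_one]
  rw [hy, nome_pow, nome_pow, ← exp_nat_mul, div_neg, mul_neg, ← sub_eq_add_neg, ← sub_eq_add_neg,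
    ← exp_add, ← exp_sub, Nat.cast_sub (by lia)]
  push_cast
  ring_nf

lemma multipliable_one_sub_nome_pow {τ : ℂ} (hτ : 0 < τ.im) {f : ℕ → ℕ} (hf : f.Injective) :
    Multipliable fun n ↦ 1 - nome τ ^ f n := by
  simp_rw [sub_eq_add_neg]
  refine multipliable_one_add_of_summable ?_
  simpa [Function.comp_def] using
    (summable_geometric_of_lt_one (norm_nonneg _) (norm_nome_lt_one hτ)).comp_injective hf

lemma tprod_one_sub_nome_pow_ne_zero {τ : ℂ} (hτ : 0 < τ.im) {f : ℕ → ℕ} (hf : f.Injective)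
    (hf0 : ∀ n, f n ≠ 0) : ∏' n, (1 - nome τ ^ f n) ≠ 0 := by
  simp_rw [sub_eq_add_neg]
  refine tprod_one_add_ne_zero_of_summable (fun n ↦ ?_) ?_
  · obtain ⟨k, hk⟩ := Nat.exists_eq_succ_of_ne_zero (hf0 n)
    simpa [sub_eq_add_neg, hk] using one_sub_pow_succ_ne_zero_s14 (norm_nome_lt_one hτ) k
  · simpa [Function.comp_def] using
      (summable_geometric_of_lt_one (norm_nonneg _) (norm_nome_lt_one hτ)).comp_injective hf

theorem c_eq_oddTheta_div {τ : ℂ} (hτ : 0 < τ.im) :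
    c τ = exp (-(4 * π * I * τ / 3)) * (oddTheta (-τ) (6 * τ) / oddTheta (-3 * τ) (6 * τ)) := by
  have hinj (k : ℕ) (hk : k ≤ 6) : (fun n : ℕ ↦ 6 * (n + 1) - k).Injective :=
    fun m n h ↦ by simp only at h; lia
  have h1 := oddTheta_neg_natCast_mul hτ (g := 1) (by simp)
  have h3 := oddTheta_neg_natCast_mul hτ (g := 3) (by simp)
  have e1 (m : ℕ) : 6 * m + 1 = 6 * (m + 1) - 5 := by lia
  have e3 (m : ℕ) : 6 * m + 3 = 6 * (m + 1) - 3 := by lia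
  simp only [e1, e3, Nat.cast_one, Nat.cast_ofNat, neg_mul, one_mul, mul_one, ← sq] at h1 h3
  have hm := multipliable_one_sub_nome_pow hτ (hinj 3 (by simp))
  have h0 : ∏' n : ℕ, (1 - nome τ ^ (6 * (n + 1) - 3)) ^ 2 ≠ 0 := by
    simp_rw [sq]
    rw [hm.tprod_mul hm]
    have := tprod_one_sub_nome_pow_ne_zero hτ (hinj 3 (by simp)) fun n ↦ by lia
    exact mul_ne_zero this this
  have hq : ‖exp (π * I * (6 * τ)) ^ 2‖ < 1 := by
    rw [show exp (π * I * (6 * τ)) ^ 2 = nome τ ^ 6 by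
      rw [nome_pow, ← exp_nat_mul]; push_cast; ring_nf, norm_pow]
    exact pow_lt_one₀ (norm_nonneg _) (norm_nome_lt_one hτ) (by simp)
  have hC := tprod_one_sub_pow_ne_zero hq
  rw [c, Multipliable.tprod_div₀ ((multipliable_one_sub_nome_pow hτ (hinj 1 (by simp))).mul
    (multipliable_one_sub_nome_pow hτ (hinj 5 (by simp)))) (by simpa only [sq] using hm.mul hm) h0,
    neg_mul, h1, h3]
  have he : exp (2 * π * I * τ / 3) * exp (-(π * I * 3 * τ)) =
      exp (-(4 * π * I * τ / 3)) * exp (-(π * I * τ)) := by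
    rw [← exp_add, ← exp_add]
    ring_nf
  have he3 : exp (-(π * I * 3 * τ)) ≠ 0 := exp_ne_zero _
  generalize (∏' n : ℕ, (1 - (exp (π * I * (6 * τ)) ^ 2) ^ (n + 1))) = C at *
  generalize exp (-(π * I * 3 * τ)) = E3 at *
  generalize exp (-(π * I * τ)) = E1 at *
  generalize exp (2 * π * I * τ / 3) = E at *
  generalize exp (-(4 * π * I * τ / 3)) = E4 at *
  rw [mul_div_assoc', mul_div_assoc', div_eq_div_iff h0 (by positivity)]
  linear_combination
    (∏' n : ℕ, (1 - nome τ ^ (6 * (n + 1) - 1)) * (1 - nome τ ^ (6 * (n + 1) - 5))) *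
      (∏' n : ℕ, (1 - nome τ ^ (6 * (n + 1) - 3)) ^ 2) * C * he

/-- Under `Γ₁(6)`, the cubic continued fraction is multiplied by a cube root of unity. -/
theorem c_smul {a b r s : ℤ} (hdet : a * s - b * r = 1) (ha : a ≡ 1 [ZMOD 6])
    (hr : r ≡ 0 [ZMOD 6]) {τ : ℂ} (hτ : 0 < τ.im) :
    c ((a * τ + b) / (r * τ + s)) = exp (-(4 * π * I * (a * b) / 3)) * c τ := by
  obtain ⟨t, rfl⟩ := Int.modEq_zero_iff_dvd.mp hr
  obtain ⟨k, hk⟩ := ha.symm.dvd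
  let g : Matrix.SpecialLinearGroup (Fin 2) ℤ :=
    ⟨!![a, 6 * b; t, s], by rw [Matrix.det_fin_two_of]; linear_combination hdet⟩
  have h6 : 0 < (6 * τ).im := by simpa using hτ
  obtain ⟨ε, hε, h⟩ := exists_oddTheta_smul g ⟨6 * τ, h6⟩
  have hsmul := UpperHalfPlane.coe_specialLinearGroup_apply g ⟨6 * τ, h6⟩
  have him := (g • (⟨6 * τ, h6⟩ : UpperHalfPlane)).im_pos
  simp only [g, Matrix.of_apply, Matrix.cons_val', Matrix.cons_val_zero, Matrix.cons_val_one,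
    Matrix.cons_val_fin_one, algebraMap_int_eq, Int.coe_castRingHom, Int.cast_mul, Int.cast_ofNat,
    ofReal_mul, ofReal_intCast, ofReal_ofNat] at hsmul h
  rw [← UpperHalfPlane.coe_im, hsmul] at him
  rw [hsmul] at h
  have hD : 6 * t * τ + s ≠ 0 := by
    intro hD
    rw [show t * (6 * τ) + s = 0 by linear_combination hD, div_zero] at him
    exact lt_irrefl _ him
  rw [show (a * (6 * τ) + 6 * b) / (t * (6 * τ) + s) = 6 * ((a * τ + b) / (6 * t * τ + s)) by
    ring_nf] at him h
  rw [show t * (6 * τ) + s = 6 * t * τ + s by ring] at h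
  push_cast
  set w := (a * τ + b) / (6 * t * τ + s) with hw
  clear_value w
  have hwim : 0 < w.im := by simpa using him
  have ha' : (a : ℂ) = 1 + 6 * k := by
    rw [← sub_eq_iff_eq_add']
    exact_mod_cast hk
  have hdet' : (a : ℂ) * s - b * (6 * t) = 1 := by exact_mod_cast hdet
  set X : ℂ := π * I * (t * (a * τ + b) ^ 2 / (6 * t * τ + s) - 6 * k ^ 2 * τ - 2 * k * τ) with hX
  have key (n : ℤ) (hn : Odd n) : oddTheta (-n * w) (6 * w) = ε * (-1) ^ b * (-1) ^ k *
      exp (n ^ 2 * X) * oddTheta (-n * τ) (6 * τ) := by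
    have hsign (m : ℤ) : (-1 : ℂ) ^ (-n * m) = (-1) ^ m := by
      rw [zpow_mul, hn.neg.neg_one_zpow]
    have h1 := h (-n * (a * τ + b))
    rw [mul_div_assoc, ← hw] at h1
    rw [h1, show -n * (a * τ + b) = -n * τ + (-n * k : ℤ) * (6 * τ) + (-n * b : ℤ) by
        push_cast; linear_combination -n * τ * ha',
      oddTheta_add_intCast, oddTheta_add_int_mul_period, hsign, hsign,
      show n ^ 2 * X = π * I * (t * (-n * (a * τ + b)) ^ 2 / (6 * t * τ + s)) +
        (-π * I * (-n * k : ℤ) ^ 2 * (6 * τ) - 2 * π * I * (-n * k : ℤ) * (-n * τ)) by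
        rw [hX]; push_cast; ring, exp_add,
      show -n * τ + (-n * k : ℤ) * (6 * τ) + (-n * b : ℤ) = -n * (a * τ + b) by
        push_cast; linear_combination n * τ * ha']
    ring
  have key1 := key 1 odd_one
  have key3 := key 3 (by decide)
  push_cast at key1 key3
  rw [neg_one_mul, one_pow, one_mul, neg_one_mul] at key1
  have hE : exp (-(4 * π * I * w / 3)) * exp X =
      exp (-(4 * π * I * (a * b) / 3)) * exp (-(4 * π * I * τ / 3)) * exp (3 ^ 2 * X) := by
    have hY : w + 6 * (t * (a * τ + b) ^ 2 / (6 * t * τ + s)) = a * (a * τ + b) := by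
      rw [hw, mul_div_assoc', ← add_div, div_eq_iff hD]
      linear_combination -(a * τ + b) * hdet'
    rw [← exp_add, ← exp_add, ← exp_add, hX]
    congr 1
    linear_combination -(4 * π * I / 3) * hY - 4 * π * I / 3 * τ * (a + 1 + 6 * k) * ha'
  have hM : ε * (-1) ^ b * (-1) ^ k * exp (3 ^ 2 * X) ≠ 0 :=
    mul_ne_zero (mul_ne_zero (mul_ne_zero hε (zpow_ne_zero _ (by simp))) (zpow_ne_zero _ (by simp)))
      (exp_ne_zero _)
  rw [c_eq_oddTheta_div hwim, c_eq_oddTheta_div hτ, key1, key3, mul_div_assoc', div_mul_eq_div_div,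
    mul_div_assoc', mul_div_assoc']
  congr 1
  rw [div_eq_iff hM]
  linear_combination ε * (-1) ^ b * (-1) ^ k * oddTheta (-τ) (6 * τ) * hE

/-- `c` is invariant under `Γ(6)`, and `c³` is invariant under `Γ₁(6)`: for
`γ = (a, b; r, s) ∈ SL₂(ℤ)` congruent to the identity mod 6 one has `c(γτ) = c(τ)`,
and for `γ ∈ SL₂(ℤ)` with `a ≡ s ≡ 1 (mod 6)`, `r ≡ 0 (mod 6)`, `c(γτ)³ = c(τ)³`. -/
theorem cubicCF_modular_invariance :
    (∀ a b r s : ℤ, a * s - b * r = 1 →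
      a ≡ 1 [ZMOD 6] → b ≡ 0 [ZMOD 6] → r ≡ 0 [ZMOD 6] → s ≡ 1 [ZMOD 6] →
      ∀ τ : ℂ, 0 < τ.im →
        c (((a : ℂ) * τ + (b : ℂ)) / ((r : ℂ) * τ + (s : ℂ))) = c τ) ∧
    (∀ a b r s : ℤ, a * s - b * r = 1 →
      a ≡ 1 [ZMOD 6] → r ≡ 0 [ZMOD 6] → s ≡ 1 [ZMOD 6] →
      ∀ τ : ℂ, 0 < τ.im →
        c (((a : ℂ) * τ + (b : ℂ)) / ((r : ℂ) * τ + (s : ℂ))) ^ 3 = c τ ^ 3) := by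
  refine ⟨fun a b r s hdet ha hb hr _ τ hτ ↦ ?_, fun a b r s hdet ha hr _ τ hτ ↦ ?_⟩
  · obtain ⟨m, rfl⟩ := Int.modEq_zero_iff_dvd.mp hb
    rw [c_smul hdet ha hr hτ, exp_eq_one_iff.mpr ⟨-4 * (a * m), by push_cast; ring⟩, one_mul]
  · rw [c_smul hdet ha hr hτ, mul_pow, ← exp_nat_mul,
      exp_eq_one_iff.mpr ⟨-2 * (a * b), by push_cast; ring⟩, one_mul]
end
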